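/- Assume u ∈ H²(Ω) and let C₁ > 0. There exists a constant C > 0 depending only on Ω, a, b, c and C₁ such that for every mesh with max_i h_i ≤ C₁/N whose finite element solution defines α_h, the following holds: if r' ∈ L¹(Ω), then ‖r‖_{L^{2/3}(Ω)}^{2/3} − (C ‖r‖_Ω / N)^{2/3} ≤ α_h^{1/3} ≤ ‖r‖_{L^{2/3}(Ω)}^{2/3} + (C ‖r'‖_{L¹(Ω)} / N)^{2/3} + (C ‖r‖_Ω / N)^{2/3}, where r = f + a' u' − b u' − c u. -/

import Mathlib

/-!
Setting of Huang–He, "Error analysis for equidistributing meshes":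
the boundary value problem  −(a u')' + b u' + c u = f on Ω = (0,1), u(0)=u(1)=0,
its linear finite element discretization on a mesh 0 = x₀ < ⋯ < x_N = 1,
and the residual-based equidistribution quantities.
-/

noncomputable section
open MeasureTheory Real

namespace EquidMesh

/-- L² norm on (0,1). -/
def L2 (g : ℝ → ℝ) : ℝ := Real.sqrt (∫ t in (0:ℝ)..1, (g t)^2)

/-- L¹ norm on (0,1). -/
def L1 (g : ℝ → ℝ) : ℝ := ∫ t in (0:ℝ)..1, |g t|

/-- The L^{2/3} quasi-norm on (0,1): (∫₀¹ |g|^{2/3})^{3/2}. -/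
def Lp23 (g : ℝ → ℝ) : ℝ := (∫ t in (0:ℝ)..1, |g t| ^ ((2:ℝ)/3)) ^ ((3:ℝ)/2)

/-- L^∞ norm (essential supremum of |g|) on (0,1). -/
def Linf (g : ℝ → ℝ) : ℝ := essSup (fun t => |g t|) (volume.restrict (Set.Ioo (0:ℝ) 1))

/-- Membership in L²(0,1). -/
def MemL2 (g : ℝ → ℝ) : Prop :=
  Measurable g ∧ IntervalIntegrable (fun t => (g t)^2) volume 0 1

/-- Membership in L^∞(0,1). -/
def MemLinf (g : ℝ → ℝ) : Prop :=
  Measurable g ∧ ∃ M : ℝ, ∀ᵐ x ∂(volume.restrict (Set.Ioo (0:ℝ) 1)), |g x| ≤ M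

/-- `g` is absolutely continuous on [0,1] with derivative `g' ∈ L¹(0,1)`. -/
def HasL1Deriv (g g' : ℝ → ℝ) : Prop :=
  Measurable g' ∧ IntervalIntegrable g' volume 0 1 ∧
    ∀ x ∈ Set.Icc (0:ℝ) 1, g x = g 0 + ∫ t in (0:ℝ)..x, g' t

/-- A function in H¹(0,1): absolutely continuous on [0,1], carried together with its
(a.e.) derivative, which lies in L²(0,1). -/
structure H1 where
  val : ℝ → ℝ
  dval : ℝ → ℝ
  dval_meas : Measurable dval
  dval_int : IntervalIntegrable dval volume 0 1
  dval_sq_int : IntervalIntegrable (fun t => (dval t)^2) volume 0 1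
  ftc : ∀ x ∈ Set.Icc (0:ℝ) 1, val x = val 0 + ∫ t in (0:ℝ)..x, dval t

/-- `u ∈ H²(0,1)`: the derivative `u'` is absolutely continuous with `u'' ∈ L²(0,1)`. -/
def H1.IsH2 (u : H1) : Prop :=
  ∃ u'' : ℝ → ℝ, Measurable u'' ∧ IntervalIntegrable u'' volume 0 1 ∧
    IntervalIntegrable (fun t => (u'' t)^2) volume 0 1 ∧
    ∀ x ∈ Set.Icc (0:ℝ) 1, u.dval x = u.dval 0 + ∫ t in (0:ℝ)..x, u'' t

/-- The coefficients of the elliptic problem on Ω = (0,1):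
`a, b ∈ W^{1,∞}(Ω)`, `c ∈ L^∞(Ω)`, `a ≥ a₀ > 0`, and `c − b'/2 ≥ 0` a.e. -/
structure Coeffs where
  a : ℝ → ℝ
  b : ℝ → ℝ
  c : ℝ → ℝ
  a' : ℝ → ℝ
  b' : ℝ → ℝ
  a0 : ℝ
  a0_pos : 0 < a0
  a_lb : ∀ x ∈ Set.Icc (0:ℝ) 1, a0 ≤ a x
  a'_meas : Measurable a'
  b'_meas : Measurable b'
  c_meas : Measurable c
  a'_int : IntervalIntegrable a' volume 0 1
  b'_int : IntervalIntegrable b' volume 0 1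
  a'_bdd : ∃ M : ℝ, ∀ᵐ x ∂(volume.restrict (Set.Ioo (0:ℝ) 1)), |a' x| ≤ M
  b'_bdd : ∃ M : ℝ, ∀ᵐ x ∂(volume.restrict (Set.Ioo (0:ℝ) 1)), |b' x| ≤ M
  c_bdd : ∃ M : ℝ, ∀ᵐ x ∂(volume.restrict (Set.Ioo (0:ℝ) 1)), |c x| ≤ M
  ftc_a : ∀ x ∈ Set.Icc (0:ℝ) 1, a x = a 0 + ∫ t in (0:ℝ)..x, a' t
  ftc_b : ∀ x ∈ Set.Icc (0:ℝ) 1, b x = b 0 + ∫ t in (0:ℝ)..x, b' t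
  cb_nonneg : ∀ᵐ x ∂(volume.restrict (Set.Ioo (0:ℝ) 1)), 0 ≤ c x - b' x / 2

/-- The bilinear form B(u,v) = ∫₀¹ (a u' v' + b u' v + c u v) dx. -/
def Coeffs.B (P : Coeffs) (u v : H1) : ℝ :=
  ∫ t in (0:ℝ)..1,
    (P.a t * u.dval t * v.dval t + P.b t * u.dval t * v.val t + P.c t * u.val t * v.val t)

/-- The right-hand side functional (f, v) = ∫₀¹ f v dx. -/
def ip (f : ℝ → ℝ) (v : H1) : ℝ := ∫ t in (0:ℝ)..1, f t * v.val t

/-- `u ∈ H¹₀(Ω)` is the weak solution: B(u,v) = (f,v) for all v ∈ H¹₀(Ω). -/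
def Coeffs.IsWeakSolution (P : Coeffs) (f : ℝ → ℝ) (u : H1) : Prop :=
  u.val 0 = 0 ∧ u.val 1 = 0 ∧
    ∀ v : H1, v.val 0 = 0 → v.val 1 = 0 → P.B u v = ip f v

/-- A mesh of N elements of Ω = (0,1): 0 = x₀ < x₁ < ⋯ < x_N = 1. -/
structure Mesh (N : ℕ) where
  x : ℕ → ℝ
  x_zero : x 0 = 0
  x_last : x N = 1
  x_mono : ∀ i < N, x i < x (i+1)

/-- Element length (the element of index `i` is `(x i, x (i+1))`, `0 ≤ i < N`). -/
def Mesh.h {N : ℕ} (m : Mesh N) (i : ℕ) : ℝ := m.x (i+1) - m.x i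

/-- `v` is piecewise linear with respect to the mesh: its derivative is constant
inside each element. -/
def Mesh.IsPL {N : ℕ} (m : Mesh N) (v : H1) : Prop :=
  ∀ i < N, ∃ s : ℝ, ∀ t ∈ Set.Ioo (m.x i) (m.x (i+1)), v.dval t = s

/-- `uh` is the linear finite element solution on the mesh `m`:
a continuous piecewise linear function vanishing at 0 and 1 with
B(u_h, v_h) = (f, v_h) for all piecewise linear v_h vanishing at 0 and 1. -/
def Coeffs.IsFESolution (P : Coeffs) (f : ℝ → ℝ) {N : ℕ} (m : Mesh N) (uh : H1) : Prop :=
  uh.val 0 = 0 ∧ uh.val 1 = 0 ∧ m.IsPL uh ∧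
    ∀ v : H1, v.val 0 = 0 → v.val 1 = 0 → m.IsPL v → P.B uh v = ip f v

/-- The residual of `w`: r = f + a' w' − b w' − c w. -/
def Coeffs.res (P : Coeffs) (f : ℝ → ℝ) (w : H1) : ℝ → ℝ :=
  fun t => f t + P.a' t * w.dval t - P.b t * w.dval t - P.c t * w.val t

/-- The element L² average ⟨g⟩_i = (h_i⁻¹ ∫_{K_i} g²)^{1/2}. -/
def Mesh.avg {N : ℕ} (m : Mesh N) (g : ℝ → ℝ) (i : ℕ) : ℝ :=
  Real.sqrt ((1 / m.h i) * ∫ t in (m.x i)..(m.x (i+1)), (g t)^2)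

/-- The intensity parameter α_h = (Σ_i h_i ⟨g⟩_i^{2/3})³. -/
def Mesh.alpha {N : ℕ} (m : Mesh N) (g : ℝ → ℝ) : ℝ :=
  (∑ i ∈ Finset.range N, m.h i * (m.avg g i) ^ ((2:ℝ)/3)) ^ 3

/-- The adaptation function value ρ_i = (1 + α_h⁻¹ ⟨g⟩_i²)^{1/3}. -/
def Mesh.rho {N : ℕ} (m : Mesh N) (g : ℝ → ℝ) (i : ℕ) : ℝ :=
  (1 + (m.alpha g)⁻¹ * (m.avg g i)^2) ^ ((1:ℝ)/3)

/-- σ_h = Σ_i ρ_i h_i. -/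
def Mesh.sigma {N : ℕ} (m : Mesh N) (g : ℝ → ℝ) : ℝ :=
  ∑ i ∈ Finset.range N, m.rho g i * m.h i

/-- The mesh equidistributes (the piecewise constant adaptation function built from) `g`:
ρ_i h_i = σ_h / N for all elements. -/
def Mesh.IsEquidistributing {N : ℕ} (m : Mesh N) (g : ℝ → ℝ) : Prop :=
  ∀ i < N, m.rho g i * m.h i = m.sigma g / (N:ℝ)

/-- Membership in the mesh set S_N: 1/(ρ₀ N) ≤ h_i ≤ 2/N for all i. -/
def Mesh.InS {N : ℕ} (m : Mesh N) (ρ0 : ℝ) : Prop :=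
  ∀ i < N, 1 / (ρ0 * (N:ℝ)) ≤ m.h i ∧ m.h i ≤ 2 / (N:ℝ)

/-- The maximum norm distance ‖X − X̃‖_∞ between two meshes with the same N. -/
def meshDist {N : ℕ} (m m' : Mesh N) : ℝ :=
  (Finset.range (N+1)).sup' (Finset.nonempty_range_iff.mpr (Nat.succ_ne_zero N))
    (fun i => |m.x i - m'.x i|)

/-- The energy norm squared ‖v‖_E² = ∫₀¹ (a v'² + (c − b'/2) v²) dx. -/
def Coeffs.energySq (P : Coeffs) (v : H1) : ℝ :=
  ∫ t in (0:ℝ)..1, (P.a t * (v.dval t)^2 + (P.c t - P.b' t / 2) * (v.val t)^2)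

/-!
The equation determines the second derivative, `u'' = -r / a`, so the piecewise linear interpolant
of `u` is within `a₀⁻¹ max_i h_i ‖r‖` of `u` in the `H¹` seminorm. Céa's lemma passes this bound on
to `u_h`, and since the residual is Lipschitz in the `H¹` seminorm,
`‖r - r_h‖ ≤ D max_i h_i ‖r‖`.

For `0 < p ≤ 1`, subadditivity and concavity of `z ↦ z ^ p` show that `Σ_i h_i ⟨g⟩_i^p` moves by at
most `‖g - k‖^p` when `g` is replaced by `k`, so `r_h` may be replaced by `r`. The sum for `r`
dominates `∫ |r|^p` because `⟨r⟩_i` dominates the `L^p` average over `K_i`, and it exceeds that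
integral by at most `(max_i h_i ‖r'‖_{L¹})^p` because `r` oscillates on `K_i` by at most
`∫_{K_i} |r'|`.
-/

section LpNorm

variable {α : Type*} [MeasurableSpace α] {ν : Measure α} {f g : α → ℝ}

lemma lpNorm_congr_ae {p : ENNReal} (h : f =ᵐ[ν] g) : lpNorm f p ν = lpNorm g p ν := by
  rw [lpNorm, lpNorm, eLpNorm_congr_ae h]
  congr 1
  exact propext (aestronglyMeasurable_congr h)

lemma lpNorm_two_sq (hg : MemLp g 2 ν) : lpNorm g 2 ν ^ 2 = ∫ x, g x ^ 2 ∂ν := by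
  have h0 : 0 ≤ ∫ x, g x ^ 2 ∂ν := integral_nonneg fun x => sq_nonneg (g x)
  rw [lpNorm_eq_integral_norm_rpow_toReal two_ne_zero ENNReal.ofNat_ne_top hg.1]
  simpa using Real.rpow_inv_natCast_pow h0 two_ne_zero

lemma abs_integral_mul_le_lpNorm (hf : MemLp f 2 ν) (hg : MemLp g 2 ν) :
    |∫ x, f x * g x ∂ν| ≤ lpNorm f 2 ν * lpNorm g 2 ν := by
  have holder := integral_mul_norm_le_Lp_mul_Lq (μ := ν) (f := f) (g := g)
    Real.HolderConjugate.two_two (by simpa using hf) (by simpa using hg)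
  refine abs_integral_le_integral_abs.trans ?_
  simp only [abs_mul]
  simpa [lpNorm_eq_integral_norm_rpow_toReal, hf.1, hg.1] using holder

lemma memLp_mul_of_ae_abs_le {p : ENNReal} {c : ℝ} (hf : AEStronglyMeasurable f ν)
    (hfc : ∀ᵐ x ∂ν, |f x| ≤ c) (hg : MemLp g p ν) : MemLp (fun x => f x * g x) p ν := by
  refine hg.of_le_mul (c := c) (hf.mul hg.1) ?_
  filter_upwards [hfc] with x hx
  rw [norm_mul]
  exact mul_le_mul_of_nonneg_right hx (norm_nonneg _)

lemma lpNorm_le_mul_of_ae_abs_le {p : ENNReal} {c : ℝ} (hf : AEStronglyMeasurable f ν)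
    (hg : MemLp g p ν) (hc : 0 ≤ c) (h : ∀ᵐ x ∂ν, |f x| ≤ c * |g x|) :
    lpNorm f p ν ≤ c * lpNorm g p ν := by
  rw [← toReal_eLpNorm hf, ← toReal_eLpNorm hg.1, ← ENNReal.toReal_ofReal hc,
    ← ENNReal.toReal_mul]
  exact ENNReal.toReal_mono (ENNReal.mul_ne_top ENNReal.ofReal_ne_top hg.eLpNorm_ne_top)
    (eLpNorm_le_mul_eLpNorm_of_ae_le_mul h p)

lemma lpNorm_mul_le_of_ae_abs_le {p : ENNReal} {c : ℝ} (hf : AEStronglyMeasurable f ν)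
    (hc : 0 ≤ c) (hfc : ∀ᵐ x ∂ν, |f x| ≤ c) (hg : MemLp g p ν) :
    lpNorm (fun x => f x * g x) p ν ≤ c * lpNorm g p ν := by
  refine lpNorm_le_mul_of_ae_abs_le (hf.mul hg.1) hg hc ?_
  filter_upwards [hfc] with x hx
  rw [abs_mul]
  exact mul_le_mul_of_nonneg_right hx (abs_nonneg _)

variable [IsProbabilityMeasure ν]

lemma lpNorm_le_lpNorm_of_exponent_le {p q : ENNReal} (hpq : p ≤ q) (hg : MemLp g q ν) :
    lpNorm g p ν ≤ lpNorm g q ν := by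
  rw [← toReal_eLpNorm hg.1, ← toReal_eLpNorm hg.1]
  exact ENNReal.toReal_mono hg.eLpNorm_ne_top (eLpNorm_le_eLpNorm_of_exponent_le hpq hg.1)

lemma lpNorm_le_of_ae_abs_le {p : ENNReal} {c : ℝ} (hg : AEStronglyMeasurable g ν)
    (hc : 0 ≤ c) (h : ∀ᵐ x ∂ν, |g x| ≤ c) : lpNorm g p ν ≤ c := by
  rw [← toReal_eLpNorm hg]
  refine ENNReal.toReal_le_of_le_ofReal hc ?_
  simpa using eLpNorm_le_of_ae_bound (p := p) (f := g) h

lemma integrable_abs_rpow {p : ℝ} {q : ENNReal} (hp : 0 < p) (hpq : ENNReal.ofReal p ≤ q)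
    (hg : MemLp g q ν) : Integrable (fun x => |g x| ^ p) ν := by
  simpa [ENNReal.toReal_ofReal hp.le] using
    (hg.mono_exponent hpq).integrable_norm_rpow (by simpa using hp) ENNReal.ofReal_ne_top

lemma integral_abs_rpow_le_lpNorm_rpow {p : ℝ} {q : ENNReal} (hp : 0 < p)
    (hpq : ENNReal.ofReal p ≤ q) (hg : MemLp g q ν) :
    ∫ x, |g x| ^ p ∂ν ≤ lpNorm g q ν ^ p := by
  have h0 : 0 ≤ ∫ x, |g x| ^ p ∂ν := integral_nonneg fun x => by positivity
  have h := lpNorm_le_lpNorm_of_exponent_le hpq hg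
  rw [lpNorm_eq_integral_norm_rpow_toReal (by simpa using hp) ENNReal.ofReal_ne_top hg.1,
    ENNReal.toReal_ofReal hp.le] at h
  simpa [Real.rpow_inv_rpow h0 hp.ne'] using Real.rpow_le_rpow (by positivity) h hp.le

lemma ae_eq_integral_of_forall_integral_mul_eq_zero (hf : MemLp f 2 ν)
    (h : ∀ φ : α → ℝ, Measurable φ → MemLp φ 2 ν → ∫ x, φ x ∂ν = 0 → ∫ x, f x * φ x ∂ν = 0) :
    f =ᵐ[ν] fun _ => ∫ x, f x ∂ν := by
  have hfi := hf.integrable one_le_two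
  set μf := ∫ x, f x ∂ν
  set φ : α → ℝ := fun x => hf.1.mk f x - μf
  have hφ : φ =ᵐ[ν] fun x => f x - μf := hf.1.ae_eq_mk.symm.mono fun x hx => by simp [φ, hx]
  have hφ2 : MemLp φ 2 ν := (memLp_congr_ae hφ).2 (hf.sub (memLp_const _))
  have hφ0 : ∫ x, φ x ∂ν = 0 := by
    rw [integral_congr_ae hφ, integral_sub hfi (integrable_const _)]
    simp [μf]
  have hfφ := h φ (hf.1.stronglyMeasurable_mk.measurable.sub_const _) hφ2 hφ0
  have hsq : ∫ x, (f x - μf) ^ 2 ∂ν = 0 := by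
    calc ∫ x, (f x - μf) ^ 2 ∂ν = ∫ x, (f x * φ x - μf * φ x) ∂ν :=
          integral_congr_ae (hφ.mono fun x hx => by simp only [hx]; ring)
      _ = 0 := by
          rw [integral_sub (f := fun x => f x * φ x) (hf.integrable_mul hφ2)
            ((hφ2.integrable one_le_two).const_mul _), integral_const_mul, hfφ, hφ0]
          simp
  have hae := (integral_eq_zero_iff_of_nonneg (fun x => sq_nonneg _)
    (hf.sub (memLp_const μf)).integrable_sq).1 hsq
  exact hae.mono fun x hx => sub_eq_zero.1 (pow_eq_zero_iff two_ne_zero |>.1 hx)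

end LpNorm

lemma sum_mul_rpow_le_rpow_sum_mul {ι : Type*} {s : Finset ι} {w z : ι → ℝ} {p : ℝ}
    (hp0 : 0 ≤ p) (hp1 : p ≤ 1) (hw : ∀ i ∈ s, 0 ≤ w i) (hw1 : ∑ i ∈ s, w i = 1)
    (hz : ∀ i ∈ s, 0 ≤ z i) : ∑ i ∈ s, w i * z i ^ p ≤ (∑ i ∈ s, w i * z i) ^ p := by
  simpa using (Real.concaveOn_rpow hp0 hp1).le_map_sum hw hw1 hz

section AbsolutelyContinuous

variable {F F' G G' : ℝ → ℝ} {a b x y : ℝ}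

lemma absolutelyContinuousOnInterval_congr (hF : AbsolutelyContinuousOnInterval F a b)
    (h : Set.EqOn F G (Set.uIcc a b)) : AbsolutelyContinuousOnInterval G a b := by
  refine Filter.Tendsto.congr' ?_ hF
  filter_upwards [Filter.mem_inf_of_right (Filter.mem_principal_self _)] with E hE
  refine Finset.sum_congr rfl fun i hi => ?_
  have hmem := hE.1 i hi
  rw [h hmem.1, h hmem.2]

lemma absolutelyContinuousOnInterval_lipschitzOnWith_comp {K : NNReal} {s : Set ℝ}
    (hG : LipschitzOnWith K G s) (hF : AbsolutelyContinuousOnInterval F a b)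
    (hs : Set.MapsTo F (Set.uIcc a b) s) :
    AbsolutelyContinuousOnInterval (fun x => G (F x)) a b := by
  have hK := Filter.Tendsto.const_mul (K : ℝ) hF
  rw [mul_zero] at hK
  refine squeeze_zero' (Filter.Eventually.of_forall fun E => by positivity) ?_ hK
  filter_upwards [Filter.mem_inf_of_right (Filter.mem_principal_self _)] with E hE
  rw [Finset.mul_sum]
  refine Finset.sum_le_sum fun i hi => ?_
  have hmem := hE.1 i hi
  exact hG.dist_le_mul _ (hs hmem.1) _ (hs hmem.2)

lemma lipschitzOnWith_inv_Ici {m : ℝ} (hm : 0 < m) :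
    LipschitzOnWith (m⁻¹ ^ 2).toNNReal (fun z : ℝ => z⁻¹) (Set.Ici m) := by
  refine LipschitzOnWith.of_dist_le_mul fun y (hy : m ≤ y) z (hz : m ≤ z) => ?_
  have hy0 := hm.trans_le hy
  have hz0 := hm.trans_le hz
  rw [Real.coe_toNNReal _ (by positivity), dist_inv_inv₀ hy0.ne' hz0.ne',
    Real.norm_of_nonneg hy0.le, Real.norm_of_nonneg hz0.le, inv_pow, ← div_eq_inv_mul, sq]
  gcongr

/-- `F` is absolutely continuous between `a` and `b`, and `F'` is its derivative almost everywhere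
there. -/
structure HasACDerivOn (F F' : ℝ → ℝ) (a b : ℝ) : Prop where
  ac : AbsolutelyContinuousOnInterval F a b
  ae_hasDerivAt : ∀ᵐ x, x ∈ Set.uIcc a b → HasDerivAt F (F' x) x

namespace HasACDerivOn

lemma of_forall_eq_add_integral (hF' : IntervalIntegrable F' volume a b)
    (h : ∀ x ∈ Set.uIcc a b, F x = F a + ∫ t in a..x, F' t) : HasACDerivOn F F' a b := by
  set I : ℝ → ℝ := fun x => F a + ∫ t in a..x, F' t
  have hI : Set.EqOn I F (Set.uIcc a b) := fun x hx => (h x hx).symm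
  have hconst : AbsolutelyContinuousOnInterval (fun _ => F a) a b :=
    contDiffOn_const.absolutelyContinuousOnInterval
  refine ⟨absolutelyContinuousOnInterval_congr (hconst.fun_add
    (hF'.absolutelyContinuousOnInterval_intervalIntegral Set.left_mem_uIcc)) hI, ?_⟩
  filter_upwards [hF'.ae_hasDerivAt_integral, Measure.ae_ne volume (min a b),
    Measure.ae_ne volume (max a b)] with x hx hmin hmax hxab
  refine ((hx hxab a Set.left_mem_uIcc).const_add (F a)).congr_of_eventuallyEq ?_
  filter_upwards [Ioo_mem_nhds (lt_of_le_of_ne hxab.1 hmin.symm) (lt_of_le_of_ne hxab.2 hmax)]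
    with z hz
  exact h z (Set.Ioo_subset_Icc_self hz)

lemma ae_deriv_eq (h : HasACDerivOn F F' a b) :
    deriv F =ᵐ[volume.restrict (Set.uIoc a b)] F' := by
  rw [Filter.EventuallyEq, ae_restrict_iff' measurableSet_uIoc]
  filter_upwards [h.ae_hasDerivAt] with x hx hxab
  exact (hx (Set.uIoc_subset_uIcc hxab)).deriv

lemma intervalIntegrable (h : HasACDerivOn F F' a b) : IntervalIntegrable F' volume a b :=
  h.ac.intervalIntegrable_deriv.congr_ae h.ae_deriv_eq

lemma integral_eq_sub (h : HasACDerivOn F F' a b) : ∫ t in a..b, F' t = F b - F a := by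
  rw [← h.ac.integral_deriv_eq_sub]
  exact intervalIntegral.integral_congr_ae_restrict h.ae_deriv_eq.symm

lemma mono (h : HasACDerivOn F F' a b) (hx : x ∈ Set.uIcc a b) (hy : y ∈ Set.uIcc a b) :
    HasACDerivOn F F' x y :=
  have hxy : Set.uIcc x y ⊆ Set.uIcc a b := Set.uIcc_subset_uIcc hx hy
  ⟨h.ac.mono hxy, h.ae_hasDerivAt.mono fun _ hz hzxy => hz (hxy hzxy)⟩

lemma mul (hF : HasACDerivOn F F' a b) (hG : HasACDerivOn G G' a b) :
    HasACDerivOn (fun x => F x * G x) (fun x => F' x * G x + F x * G' x) a b where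
  ac := hF.ac.fun_mul hG.ac
  ae_hasDerivAt := by
    filter_upwards [hF.ae_hasDerivAt, hG.ae_hasDerivAt] with x hFx hGx hx
    exact (hFx hx).mul (hGx hx)

lemma inv {m : ℝ} (hm : 0 < m) (hF : HasACDerivOn F F' a b)
    (hmF : ∀ x ∈ Set.uIcc a b, m ≤ F x) :
    HasACDerivOn (fun x => (F x)⁻¹) (fun x => -F' x / F x ^ 2) a b where
  ac := absolutelyContinuousOnInterval_lipschitzOnWith_comp (lipschitzOnWith_inv_Ici hm) hF.ac hmF
  ae_hasDerivAt := by
    filter_upwards [hF.ae_hasDerivAt] with x hFx hx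
    exact (hFx hx).inv (hm.trans_le (hmF x hx)).ne'

lemma abs_sub_le_integral_abs (h : HasACDerivOn F F' a b) (hab : a ≤ b) (hx : x ∈ Set.Icc a b)
    (hy : y ∈ Set.Icc a b) : |F x - F y| ≤ ∫ t in a..b, |F' t| := by
  rw [← Set.uIcc_of_le hab] at hx hy
  rw [← (h.mono hy hx).integral_eq_sub]
  refine (intervalIntegral.norm_integral_le_integral_norm_uIoc (f := F')).trans ?_
  rw [intervalIntegral.integral_of_le hab]
  refine setIntegral_mono_set h.intervalIntegrable.1.abs
    (Filter.Eventually.of_forall fun _ => abs_nonneg _) (LE.le.eventuallyLE ?_)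
  rw [← Set.uIoc_of_le hab]
  exact Set.uIoc_subset_uIoc_of_uIcc_subset_uIcc (Set.uIcc_subset_uIcc hy hx)

end HasACDerivOn

end AbsolutelyContinuous

section UniformMeasure

/-- The uniform probability measure on the interval from `x` to `y`, where `x < y`; its `L²` norm
is the root mean square. -/
def uniformMeasure (x y : ℝ) : Measure ℝ := ProbabilityTheory.cond volume (Set.Ioc x y)

variable {F F' g : ℝ → ℝ} {x y : ℝ}

lemma isProbabilityMeasure_uniformMeasure (hxy : x < y) :
    IsProbabilityMeasure (uniformMeasure x y) :=
  ProbabilityTheory.cond_isProbabilityMeasure_of_finite (by simpa using hxy) (by simp)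

lemma ae_uniformMeasure_of_ae_restrict_Ioo {p : ℝ → Prop}
    (h : ∀ᵐ t ∂volume.restrict (Set.Ioo x y), p t) : ∀ᵐ t ∂uniformMeasure x y, p t := by
  rw [Measure.restrict_congr_set Ioo_ae_eq_Ioc] at h
  exact Measure.ae_smul_measure h _

lemma ae_mem_uniformMeasure (x y : ℝ) : ∀ᵐ t ∂uniformMeasure x y, t ∈ Set.Ioo x y :=
  ae_uniformMeasure_of_ae_restrict_Ioo (ae_restrict_mem measurableSet_Ioo)

lemma integral_uniformMeasure (hxy : x ≤ y) (g : ℝ → ℝ) :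
    ∫ t, g t ∂uniformMeasure x y = (y - x)⁻¹ * ∫ t in x..y, g t := by
  rw [intervalIntegral.integral_of_le hxy, uniformMeasure, ProbabilityTheory.cond,
    integral_smul_measure]
  simp [ENNReal.toReal_ofReal (sub_nonneg.2 hxy)]

lemma integrable_uniformMeasure_iff (hxy : x < y) :
    Integrable g (uniformMeasure x y) ↔ IntervalIntegrable g volume x y := by
  rw [intervalIntegrable_iff_integrableOn_Ioc_of_le hxy.le, uniformMeasure, ProbabilityTheory.cond,
    integrable_smul_measure (by simp) (by simpa using hxy)]
  rfl

lemma memLp_uniformMeasure_of_subset {a b : ℝ} {p : ENNReal} (hxy : x < y)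
    (hsub : Set.Ioc x y ⊆ Set.Ioc a b) (hg : MemLp g p (uniformMeasure a b)) :
    MemLp g p (uniformMeasure x y) := by
  have hab : volume (Set.Ioc a b) ≠ 0 := fun h => by
    simpa [hxy.not_ge] using measure_mono_null hsub h
  have hrestrict : MemLp g p (volume.restrict (Set.Ioc a b)) := by
    have h := hg.smul_measure (c := volume (Set.Ioc a b)) (by simp)
    rwa [uniformMeasure, ProbabilityTheory.cond, smul_smul,
      ENNReal.mul_inv_cancel hab (by simp), one_smul] at h
  exact (hrestrict.mono_measure (Measure.restrict_mono_set _ hsub)).smul_measure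
    (by simpa using hxy)

lemma memLp_uniformMeasure_of_continuousOn (hxy : x < y) (p : ENNReal)
    (hg : ContinuousOn g (Set.uIcc x y)) : MemLp g p (uniformMeasure x y) := by
  have := isProbabilityMeasure_uniformMeasure hxy
  obtain ⟨M, hM⟩ := isCompact_uIcc.exists_bound_of_continuousOn hg
  have hIoc : Set.Ioc x y ⊆ Set.uIcc x y := Set.Ioc_subset_Icc_self.trans Set.Icc_subset_uIcc
  have hgm := (hg.mono hIoc).aestronglyMeasurable (μ := volume) measurableSet_Ioc
  refine MemLp.of_bound (hgm.smul_measure _) M ?_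
  filter_upwards [ae_mem_uniformMeasure x y] with t ht
  exact hM t (hIoc (Set.Ioo_subset_Ioc_self ht))

namespace HasACDerivOn

lemma abs_sub_le_mul_lpNorm (h : HasACDerivOn F F' x y) (hxy : x < y) {s t : ℝ}
    (hs : s ∈ Set.Icc x y) (ht : t ∈ Set.Icc x y) :
    |F s - F t| ≤ (y - x) * lpNorm F' 1 (uniformMeasure x y) := by
  have hF' := ((integrable_uniformMeasure_iff hxy).2 h.intervalIntegrable).aestronglyMeasurable
  rw [lpNorm_one_eq_integral_norm hF', integral_uniformMeasure hxy.le,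
    mul_inv_cancel_left₀ (sub_pos.2 hxy).ne']
  exact h.abs_sub_le_integral_abs hxy.le hs ht

lemma abs_sub_integral_le_mul_lpNorm (h : HasACDerivOn F F' x y) (hxy : x < y) {t : ℝ}
    (ht : t ∈ Set.Icc x y) :
    |F t - ∫ s, F s ∂uniformMeasure x y| ≤ (y - x) * lpNorm F' 1 (uniformMeasure x y) := by
  have := isProbabilityMeasure_uniformMeasure hxy
  have hF : Integrable F (uniformMeasure x y) :=
    (integrable_uniformMeasure_iff hxy).2 h.ac.continuousOn.intervalIntegrable
  have hmean : F t - ∫ s, F s ∂uniformMeasure x y = ∫ s, (F t - F s) ∂uniformMeasure x y := by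
    rw [integral_sub (integrable_const _) hF]
    simp
  have hosc : ∀ᵐ s ∂uniformMeasure x y,
      ‖F t - F s‖ ≤ (y - x) * lpNorm F' 1 (uniformMeasure x y) := by
    filter_upwards [ae_mem_uniformMeasure x y] with s hs
    exact h.abs_sub_le_mul_lpNorm hxy ht (Set.Ioo_subset_Icc_self hs)
  rw [hmean]
  simpa using norm_integral_le_of_norm_le_const hosc

lemma lpNorm_sub_integral_le (h : HasACDerivOn F F' x y) (hxy : x < y) {p : ENNReal} (hp : 1 ≤ p)
    (hF' : MemLp F' p (uniformMeasure x y)) :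
    lpNorm (fun t => F t - ∫ s, F s ∂uniformMeasure x y) p (uniformMeasure x y)
      ≤ (y - x) * lpNorm F' p (uniformMeasure x y) := by
  have := isProbabilityMeasure_uniformMeasure hxy
  have hF := memLp_uniformMeasure_of_continuousOn hxy p h.ac.continuousOn
  calc lpNorm (fun t => F t - ∫ s, F s ∂uniformMeasure x y) p (uniformMeasure x y)
      ≤ (y - x) * lpNorm F' 1 (uniformMeasure x y) := by
        refine lpNorm_le_of_ae_abs_le (hF.1.sub aestronglyMeasurable_const)
          (mul_nonneg (sub_pos.2 hxy).le lpNorm_nonneg) ?_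
        filter_upwards [ae_mem_uniformMeasure x y] with t ht
        exact h.abs_sub_integral_le_mul_lpNorm hxy (Set.Ioo_subset_Icc_self ht)
    _ ≤ (y - x) * lpNorm F' p (uniformMeasure x y) :=
        mul_le_mul_of_nonneg_left (lpNorm_le_lpNorm_of_exponent_le hp hF') (sub_pos.2 hxy).le

end HasACDerivOn

end UniformMeasure

/-- Lebesgue measure on the domain `(0, 1)`. -/
abbrev unitMeasure : Measure ℝ := uniformMeasure 0 1

instance : IsProbabilityMeasure unitMeasure := isProbabilityMeasure_uniformMeasure zero_lt_one

lemma integral_unitMeasure (g : ℝ → ℝ) : ∫ t, g t ∂unitMeasure = ∫ t in (0 : ℝ)..1, g t := by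
  simp [integral_uniformMeasure zero_le_one]

lemma MemL2.memLp {g : ℝ → ℝ} (hg : MemL2 g) : MemLp g 2 unitMeasure :=
  (memLp_two_iff_integrable_sq hg.1.aestronglyMeasurable).2
    ((integrable_uniformMeasure_iff zero_lt_one).2 hg.2)

lemma HasL1Deriv.hasACDerivOn {g g' : ℝ → ℝ} (h : HasL1Deriv g g') : HasACDerivOn g g' 0 1 :=
  .of_forall_eq_add_integral h.2.1 (by simpa using h.2.2)

lemma L1_eq_lpNorm {g : ℝ → ℝ} (hg : AEStronglyMeasurable g unitMeasure) :
    L1 g = lpNorm g 1 unitMeasure := by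
  rw [lpNorm_one_eq_integral_norm hg, integral_unitMeasure]
  rfl

lemma L2_eq_lpNorm {g : ℝ → ℝ} (hg : MemLp g 2 unitMeasure) : L2 g = lpNorm g 2 unitMeasure := by
  rw [L2, ← integral_unitMeasure, ← lpNorm_two_sq hg, Real.sqrt_sq lpNorm_nonneg]

lemma Lp23_rpow (g : ℝ → ℝ) :
    Lp23 g ^ ((2 : ℝ) / 3) = ∫ t in (0 : ℝ)..1, |g t| ^ ((2 : ℝ) / 3) := by
  have h0 : 0 ≤ ∫ t in (0 : ℝ)..1, |g t| ^ ((2 : ℝ) / 3) :=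
    intervalIntegral.integral_nonneg zero_le_one fun t _ => by positivity
  rw [Lp23, ← Real.rpow_mul h0]
  norm_num

namespace H1

lemma hasACDerivOn (v : H1) : HasACDerivOn v.val v.dval 0 1 :=
  .of_forall_eq_add_integral v.dval_int (by simpa using v.ftc)

lemma memLp_dval (v : H1) : MemLp v.dval 2 unitMeasure :=
  MemL2.memLp ⟨v.dval_meas, v.dval_sq_int⟩

lemma memLp_val (v : H1) : MemLp v.val 2 unitMeasure :=
  memLp_uniformMeasure_of_continuousOn zero_lt_one 2 v.hasACDerivOn.ac.continuousOn

/-- The primitive of `g` vanishing at `0`. -/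
def primitive (g : ℝ → ℝ) (hg : Measurable g) (hg2 : MemLp g 2 unitMeasure) : H1 where
  val x := ∫ t in (0 : ℝ)..x, g t
  dval := g
  dval_meas := hg
  dval_int := (integrable_uniformMeasure_iff zero_lt_one).1 (hg2.integrable one_le_two)
  dval_sq_int := (integrable_uniformMeasure_iff zero_lt_one).1 hg2.integrable_sq
  ftc x _ := by simp

/-- Differences of `H¹` functions, formed on values and on derivatives. -/
instance : Sub H1 where
  sub u v :=
    { val := fun t => u.val t - v.val t
      dval := fun t => u.dval t - v.dval t
      dval_meas := u.dval_meas.sub v.dval_meas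
      dval_int := u.dval_int.sub v.dval_int
      dval_sq_int := (integrable_uniformMeasure_iff zero_lt_one).1
        (u.memLp_dval.sub v.memLp_dval).integrable_sq
      ftc := fun x hx => by
        have h0x : Set.uIcc 0 x ⊆ Set.uIcc (0 : ℝ) 1 :=
          Set.uIcc_subset_uIcc Set.left_mem_uIcc (by simpa using hx)
        rw [intervalIntegral.integral_sub (u.dval_int.mono_set h0x) (v.dval_int.mono_set h0x),
          u.ftc x hx, v.ftc x hx]
        ring }

@[simp] lemma sub_val (u v : H1) (t : ℝ) : (u - v).val t = u.val t - v.val t := rfl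

@[simp] lemma sub_dval (u v : H1) (t : ℝ) : (u - v).dval t = u.dval t - v.dval t := rfl

/-- The `H¹` seminorm `|v|₁ = ‖v'‖`, a norm on the functions vanishing at `0`. -/
def seminorm (v : H1) : ℝ := lpNorm v.dval 2 unitMeasure

lemma seminorm_nonneg (v : H1) : 0 ≤ v.seminorm := lpNorm_nonneg

lemma lpNorm_val_le_seminorm (v : H1) (h0 : v.val 0 = 0) :
    lpNorm v.val 2 unitMeasure ≤ v.seminorm := by
  refine lpNorm_le_of_ae_abs_le v.memLp_val.1 v.seminorm_nonneg ?_
  filter_upwards [ae_mem_uniformMeasure 0 1] with t ht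
  have hosc := v.hasACDerivOn.abs_sub_le_mul_lpNorm zero_lt_one (Set.Ioo_subset_Icc_self ht)
    (Set.left_mem_Icc.2 zero_le_one)
  rw [h0, sub_zero, sub_zero, one_mul] at hosc
  exact hosc.trans (lpNorm_le_lpNorm_of_exponent_le one_le_two v.memLp_dval)

end H1

namespace Coeffs

lemma hasACDerivOn_a (P : Coeffs) : HasACDerivOn P.a P.a' 0 1 :=
  .of_forall_eq_add_integral P.a'_int (by simpa using P.ftc_a)

lemma hasACDerivOn_b (P : Coeffs) : HasACDerivOn P.b P.b' 0 1 :=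
  .of_forall_eq_add_integral P.b'_int (by simpa using P.ftc_b)

/-- `K` bounds the coefficients `a`, `a'`, `b` and `c`. -/
structure BoundedBy (P : Coeffs) (K : ℝ) : Prop where
  a : ∀ᵐ t ∂unitMeasure, |P.a t| ≤ K
  a' : ∀ᵐ t ∂unitMeasure, |P.a' t| ≤ K
  b : ∀ᵐ t ∂unitMeasure, |P.b t| ≤ K
  c : ∀ᵐ t ∂unitMeasure, |P.c t| ≤ K

lemma exists_boundedBy (P : Coeffs) : ∃ K : ℝ, P.BoundedBy K := by
  obtain ⟨A, hA⟩ := isCompact_uIcc.exists_bound_of_continuousOn P.hasACDerivOn_a.ac.continuousOn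
  obtain ⟨B, hB⟩ := isCompact_uIcc.exists_bound_of_continuousOn P.hasACDerivOn_b.ac.continuousOn
  obtain ⟨A', hA'⟩ := P.a'_bdd
  obtain ⟨C, hC⟩ := P.c_bdd
  have hunit : ∀ᵐ t ∂unitMeasure, t ∈ Set.uIcc (0 : ℝ) 1 :=
    (ae_mem_uniformMeasure 0 1).mono fun t ht => Set.Icc_subset_uIcc (Set.Ioo_subset_Icc_self ht)
  refine ⟨max (max A A') (max B C), ?_, ?_, ?_, ?_⟩
  · filter_upwards [hunit] with t ht
    exact (hA t ht).trans (by simp)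
  · filter_upwards [ae_uniformMeasure_of_ae_restrict_Ioo hA'] with t ht
    exact ht.trans (by simp)
  · filter_upwards [hunit] with t ht
    exact (hB t ht).trans (by simp)
  · filter_upwards [ae_uniformMeasure_of_ae_restrict_Ioo hC] with t ht
    exact ht.trans (by simp)

/-- The terms `b u' + c u` of the differential operator of order at most one. -/
def lowerOrder (P : Coeffs) (u : H1) (t : ℝ) : ℝ := P.b t * u.dval t + P.c t * u.val t

lemma res_eq_sub_lowerOrder (P : Coeffs) (f : ℝ → ℝ) (u : H1) (t : ℝ) :
    P.res f u t = P.a' t * u.dval t - (P.lowerOrder u t - f t) := by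
  simp only [res, lowerOrder]
  ring

section Integrability

variable (P : Coeffs) {f g : ℝ → ℝ}

lemma aestronglyMeasurable_a : AEStronglyMeasurable P.a unitMeasure :=
  (memLp_uniformMeasure_of_continuousOn zero_lt_one 1 P.hasACDerivOn_a.ac.continuousOn).1

lemma aestronglyMeasurable_b : AEStronglyMeasurable P.b unitMeasure :=
  (memLp_uniformMeasure_of_continuousOn zero_lt_one 1 P.hasACDerivOn_b.ac.continuousOn).1

lemma memLp_a_mul (hg : MemLp g 2 unitMeasure) : MemLp (fun t => P.a t * g t) 2 unitMeasure := by
  obtain ⟨K, hP⟩ := P.exists_boundedBy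
  exact memLp_mul_of_ae_abs_le P.aestronglyMeasurable_a hP.a hg

lemma memLp_a'_mul (hg : MemLp g 2 unitMeasure) : MemLp (fun t => P.a' t * g t) 2 unitMeasure := by
  obtain ⟨K, hP⟩ := P.exists_boundedBy
  exact memLp_mul_of_ae_abs_le P.a'_meas.aestronglyMeasurable hP.a' hg

lemma memLp_b_mul (hg : MemLp g 2 unitMeasure) : MemLp (fun t => P.b t * g t) 2 unitMeasure := by
  obtain ⟨K, hP⟩ := P.exists_boundedBy
  exact memLp_mul_of_ae_abs_le P.aestronglyMeasurable_b hP.b hg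

lemma memLp_c_mul (hg : MemLp g 2 unitMeasure) : MemLp (fun t => P.c t * g t) 2 unitMeasure := by
  obtain ⟨K, hP⟩ := P.exists_boundedBy
  exact memLp_mul_of_ae_abs_le P.c_meas.aestronglyMeasurable hP.c hg

lemma memLp_lowerOrder (u : H1) : MemLp (P.lowerOrder u) 2 unitMeasure :=
  (P.memLp_b_mul u.memLp_dval).add (P.memLp_c_mul u.memLp_val)

lemma memLp_res (hf : MemL2 f) (u : H1) : MemLp (P.res f u) 2 unitMeasure := by
  simp only [funext (P.res_eq_sub_lowerOrder f u)]
  exact (P.memLp_a'_mul u.memLp_dval).sub ((P.memLp_lowerOrder u).sub hf.memLp)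

end Integrability

lemma B_eq (P : Coeffs) (u v : H1) :
    P.B u v = ∫ t, P.a t * u.dval t * v.dval t ∂unitMeasure
      + ∫ t, P.lowerOrder u t * v.val t ∂unitMeasure := by
  rw [← integral_add (f := fun t => P.a t * u.dval t * v.dval t)
    (g := fun t => P.lowerOrder u t * v.val t)
    ((P.memLp_a_mul u.memLp_dval).integrable_mul v.memLp_dval)
    ((P.memLp_lowerOrder u).integrable_mul v.memLp_val), integral_unitMeasure, B]
  congr 1 with t
  simp only [lowerOrder]
  ring

lemma intervalIntegrable_B (P : Coeffs) (u v : H1) :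
    IntervalIntegrable (fun t => P.a t * u.dval t * v.dval t + P.b t * u.dval t * v.val t
      + P.c t * u.val t * v.val t) volume 0 1 :=
  (integrable_uniformMeasure_iff zero_lt_one).1
    ((((P.memLp_a_mul u.memLp_dval).integrable_mul v.memLp_dval).add
      ((P.memLp_b_mul u.memLp_dval).integrable_mul v.memLp_val)).add
        ((P.memLp_c_mul u.memLp_val).integrable_mul v.memLp_val))

lemma B_sub_left (P : Coeffs) (u w v : H1) : P.B (u - w) v = P.B u v - P.B w v := by
  rw [B, B, B, ← intervalIntegral.integral_sub (P.intervalIntegrable_B u v)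
    (P.intervalIntegrable_B w v)]
  congr 1 with t
  simp only [H1.sub_val, H1.sub_dval]
  ring

lemma B_sub_right (P : Coeffs) (v u w : H1) : P.B v (u - w) = P.B v u - P.B v w := by
  rw [B, B, B, ← intervalIntegral.integral_sub (P.intervalIntegrable_B v u)
    (P.intervalIntegrable_B v w)]
  congr 1 with t
  simp only [H1.sub_val, H1.sub_dval]
  ring

namespace BoundedBy

variable {P : Coeffs} {K : ℝ}

lemma nonneg (hP : P.BoundedBy K) : 0 ≤ K := by
  obtain ⟨t, ht⟩ := hP.a.exists
  exact (abs_nonneg _).trans ht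

lemma lpNorm_lowerOrder_le (hP : P.BoundedBy K) (u : H1)
    (hu : u.val 0 = 0) : lpNorm (P.lowerOrder u) 2 unitMeasure ≤ 2 * K * u.seminorm := by
  calc lpNorm (P.lowerOrder u) 2 unitMeasure
      ≤ lpNorm (fun t => P.b t * u.dval t) 2 unitMeasure
        + lpNorm (fun t => P.c t * u.val t) 2 unitMeasure :=
        lpNorm_add_le (P.memLp_b_mul u.memLp_dval) one_le_two
    _ ≤ K * u.seminorm + K * lpNorm u.val 2 unitMeasure :=
        add_le_add (lpNorm_mul_le_of_ae_abs_le P.aestronglyMeasurable_b hP.nonneg hP.b u.memLp_dval)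
          (lpNorm_mul_le_of_ae_abs_le P.c_meas.aestronglyMeasurable hP.nonneg hP.c u.memLp_val)
    _ ≤ K * u.seminorm + K * u.seminorm := by
        gcongr
        · exact hP.nonneg
        · exact u.lpNorm_val_le_seminorm hu
    _ = 2 * K * u.seminorm := by ring

lemma abs_B_le (hP : P.BoundedBy K) (u v : H1) (hu : u.val 0 = 0)
    (hv : v.val 0 = 0) : |P.B u v| ≤ 3 * K * u.seminorm * v.seminorm := by
  have hK := hP.nonneg
  have hu0 := u.seminorm_nonneg
  calc |P.B u v|
      ≤ |∫ t, P.a t * u.dval t * v.dval t ∂unitMeasure|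
        + |∫ t, P.lowerOrder u t * v.val t ∂unitMeasure| := by
        rw [B_eq]
        exact abs_add_le _ _
    _ ≤ lpNorm (fun t => P.a t * u.dval t) 2 unitMeasure * v.seminorm
        + lpNorm (P.lowerOrder u) 2 unitMeasure * lpNorm v.val 2 unitMeasure :=
        add_le_add (abs_integral_mul_le_lpNorm (P.memLp_a_mul u.memLp_dval) v.memLp_dval)
          (abs_integral_mul_le_lpNorm (P.memLp_lowerOrder u) v.memLp_val)
    _ ≤ K * u.seminorm * v.seminorm + 2 * K * u.seminorm * v.seminorm := by
        gcongr
        · exact v.seminorm_nonneg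
        · exact lpNorm_mul_le_of_ae_abs_le P.aestronglyMeasurable_a hP.nonneg hP.a u.memLp_dval
        · exact lpNorm_nonneg
        · exact hP.lpNorm_lowerOrder_le u hu
        · exact v.lpNorm_val_le_seminorm hv
    _ = 3 * K * u.seminorm * v.seminorm := by ring

lemma lpNorm_res_sub_res_le (hP : P.BoundedBy K) (f : ℝ → ℝ) (u w : H1)
    (h : u.val 0 = w.val 0) :
    lpNorm (P.res f u - P.res f w) 2 unitMeasure ≤ 3 * K * (u - w).seminorm := by
  have hdiff : P.res f u - P.res f w
      = (fun t => P.a' t * (u - w).dval t) - P.lowerOrder (u - w) := by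
    ext t
    simp only [res, lowerOrder, Pi.sub_apply, H1.sub_val, H1.sub_dval]
    ring
  calc lpNorm (P.res f u - P.res f w) 2 unitMeasure
      ≤ lpNorm (fun t => P.a' t * (u - w).dval t) 2 unitMeasure
        + lpNorm (P.lowerOrder (u - w)) 2 unitMeasure := by
        rw [hdiff]
        exact lpNorm_sub_le (P.memLp_a'_mul (u - w).memLp_dval) one_le_two
    _ ≤ K * (u - w).seminorm + 2 * K * (u - w).seminorm :=
        add_le_add (lpNorm_mul_le_of_ae_abs_le P.a'_meas.aestronglyMeasurable hP.nonneg hP.a'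
          (u - w).memLp_dval) (hP.lpNorm_lowerOrder_le _ (by simp [h]))
    _ = 3 * K * (u - w).seminorm := by ring

end BoundedBy

lemma B_self_eq_energySq (P : Coeffs) (v : H1) (h0 : v.val 0 = 0) (h1 : v.val 1 = 0) :
    P.B v v = P.energySq v := by
  have hbv := P.hasACDerivOn_b.mul (v.hasACDerivOn.mul v.hasACDerivOn)
  have hbv0 : ∫ t in (0 : ℝ)..1, 1 / 2 * (P.b' t * (v.val t * v.val t)
      + P.b t * (v.dval t * v.val t + v.val t * v.dval t)) = 0 := by
    rw [intervalIntegral.integral_const_mul, hbv.integral_eq_sub]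
    simp [h0, h1]
  rw [← sub_zero (P.B v v), ← hbv0, B, energySq, ← intervalIntegral.integral_sub
    (P.intervalIntegrable_B v v) (hbv.intervalIntegrable.const_mul _)]
  congr 1 with t
  ring

lemma intervalIntegrable_energySq (P : Coeffs) (v : H1) :
    IntervalIntegrable (fun t => P.a t * v.dval t ^ 2 + (P.c t - P.b' t / 2) * v.val t ^ 2)
      volume 0 1 := by
  refine ((P.intervalIntegrable_B v v).sub ((P.hasACDerivOn_b.mul
    (v.hasACDerivOn.mul v.hasACDerivOn)).intervalIntegrable.const_mul (1 / 2))).congr ?_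
  exact fun t _ => by ring

lemma mul_seminorm_sq_le_energySq (P : Coeffs) (v : H1) :
    P.a0 * v.seminorm ^ 2 ≤ P.energySq v := by
  rw [H1.seminorm, lpNorm_two_sq v.memLp_dval, ← integral_const_mul, energySq,
    ← integral_unitMeasure]
  refine integral_mono_ae (v.memLp_dval.integrable_sq.const_mul _)
    ((integrable_uniformMeasure_iff zero_lt_one).2 (P.intervalIntegrable_energySq v)) ?_
  filter_upwards [ae_uniformMeasure_of_ae_restrict_Ioo P.cb_nonneg, ae_mem_uniformMeasure 0 1]
    with t hc ht
  have ha := mul_le_mul_of_nonneg_right (P.a_lb t (Set.Ioo_subset_Icc_self ht))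
    (sq_nonneg (v.dval t))
  exact ha.trans (le_add_of_nonneg_right (mul_nonneg hc (sq_nonneg _)))

namespace IsWeakSolution

variable {P : Coeffs} {f : ℝ → ℝ} {u : H1}

lemma integral_flux_sub_mul_dval (hf : MemL2 f) (hu : P.IsWeakSolution f u) {G : ℝ → ℝ}
    (hG : HasACDerivOn G (fun t => P.lowerOrder u t - f t) 0 1) (v : H1) (h0 : v.val 0 = 0)
    (h1 : v.val 1 = 0) : ∫ t in (0 : ℝ)..1, (P.a t * u.dval t - G t) * v.dval t = 0 := by
  have hparts := hG.mul v.hasACDerivOn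
  have hfv : IntervalIntegrable (fun t => f t * v.val t) volume 0 1 :=
    (integrable_uniformMeasure_iff zero_lt_one).1 (hf.memLp.integrable_mul v.memLp_val)
  calc ∫ t in (0 : ℝ)..1, (P.a t * u.dval t - G t) * v.dval t
      = (P.B u v - ip f v)
        - ∫ t in (0 : ℝ)..1, ((P.lowerOrder u t - f t) * v.val t + G t * v.dval t) := by
        rw [B, ip, ← intervalIntegral.integral_sub (P.intervalIntegrable_B u v) hfv,
          ← intervalIntegral.integral_sub ((P.intervalIntegrable_B u v).sub hfv)
            hparts.intervalIntegrable]
        congr 1 with t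
        simp only [lowerOrder]
        ring
    _ = 0 := by rw [hu.2.2 v h0 h1, hparts.integral_eq_sub, h0, h1]; ring

lemma exists_flux (hf : MemL2 f) (hu : P.IsWeakSolution f u) :
    ∃ σ : ℝ → ℝ, HasACDerivOn σ (fun t => P.lowerOrder u t - f t) 0 1 ∧
      (fun t => P.a t * u.dval t) =ᵐ[unitMeasure] σ := by
  have hσ : ∀ κ : ℝ, HasACDerivOn (fun x => κ + ∫ t in (0 : ℝ)..x, (P.lowerOrder u t - f t))
      (fun t => P.lowerOrder u t - f t) 0 1 := fun κ =>
    .of_forall_eq_add_integral ((integrable_uniformMeasure_iff zero_lt_one).1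
      (((P.memLp_lowerOrder u).sub hf.memLp).integrable one_le_two)) (by simp)
  set G : ℝ → ℝ := fun x => 0 + ∫ t in (0 : ℝ)..x, (P.lowerOrder u t - f t)
  have hG2 : MemLp G 2 unitMeasure :=
    memLp_uniformMeasure_of_continuousOn zero_lt_one 2 (hσ 0).ac.continuousOn
  have hconst := ae_eq_integral_of_forall_integral_mul_eq_zero
    (f := fun t => P.a t * u.dval t - G t) ((P.memLp_a_mul u.memLp_dval).sub hG2)
    fun φ hφ hφ2 hφ0 => by
      rw [integral_unitMeasure] at hφ0 ⊢
      exact hu.integral_flux_sub_mul_dval hf (hσ 0) (H1.primitive φ hφ hφ2)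
        intervalIntegral.integral_same hφ0
  refine ⟨_, hσ (∫ t, (P.a t * u.dval t - G t) ∂unitMeasure), ?_⟩
  filter_upwards [hconst] with t ht
  rw [← ht]
  simp only [G]
  ring

lemma exists_hasACDerivOn (hf : MemL2 f) (hu : P.IsWeakSolution f u) :
    ∃ q q' : ℝ → ℝ, HasACDerivOn q q' 0 1 ∧ u.dval =ᵐ[unitMeasure] q ∧
      q' =ᵐ[unitMeasure] fun t => -(P.a t)⁻¹ * P.res f u t := by
  obtain ⟨σ, hσ, hau⟩ := hu.exists_flux hf
  have hpos : ∀ᵐ t ∂unitMeasure, 0 < P.a t := (ae_mem_uniformMeasure 0 1).mono fun t ht =>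
    P.a0_pos.trans_le (P.a_lb t (Set.Ioo_subset_Icc_self ht))
  refine ⟨_, _, hσ.mul (P.hasACDerivOn_a.inv P.a0_pos (by simpa using P.a_lb)), ?_, ?_⟩
  · filter_upwards [hau, hpos] with t ht hat
    rw [← ht]
    field_simp
  · filter_upwards [hau, hpos] with t ht hat
    rw [res_eq_sub_lowerOrder, ← ht]
    field_simp
    ring

lemma exists_hasACDerivOn_lpNorm_le (hf : MemL2 f) (hu : P.IsWeakSolution f u) :
    ∃ q q' : ℝ → ℝ, HasACDerivOn q q' 0 1 ∧ u.dval =ᵐ[unitMeasure] q ∧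
      MemLp q' 2 unitMeasure ∧
      lpNorm q' 2 unitMeasure ≤ P.a0⁻¹ * lpNorm (P.res f u) 2 unitMeasure := by
  obtain ⟨q, q', hq, huq, hq'⟩ := hu.exists_hasACDerivOn hf
  have hbound : ∀ᵐ t ∂unitMeasure, |q' t| ≤ P.a0⁻¹ * |P.res f u t| := by
    filter_upwards [hq', ae_mem_uniformMeasure 0 1] with t hq't ht
    have ha := P.a_lb t (Set.Ioo_subset_Icc_self ht)
    have ha0 := P.a0_pos
    rw [hq't, abs_mul, abs_neg, abs_of_nonneg (inv_nonneg.2 (ha0.le.trans ha))]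
    gcongr
  have hq'm : AEStronglyMeasurable q' unitMeasure :=
    ((integrable_uniformMeasure_iff zero_lt_one).2 hq.intervalIntegrable).aestronglyMeasurable
  have hres := P.memLp_res hf u
  exact ⟨q, q', hq, huq, hres.of_le_mul hq'm hbound,
    lpNorm_le_mul_of_ae_abs_le hq'm hres (inv_nonneg.2 P.a0_pos.le) hbound⟩

end IsWeakSolution

end Coeffs

namespace Mesh

variable {N : ℕ} (m : Mesh N) {i : ℕ} {F F' g : ℝ → ℝ}

lemma strictMonoOn_x : StrictMonoOn m.x (Set.Iic N) :=
  strictMonoOn_Iic_of_lt_succ fun i hi => m.x_mono i hi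

lemma x_mem_Icc (hi : i ≤ N) : m.x i ∈ Set.Icc (0 : ℝ) 1 :=
  ⟨m.x_zero ▸ m.strictMonoOn_x.monotoneOn (Nat.zero_le N) hi (Nat.zero_le i),
    m.x_last ▸ m.strictMonoOn_x.monotoneOn hi (Set.mem_Iic.2 le_rfl) hi⟩

lemma h_pos (hi : i < N) : 0 < m.h i := sub_pos.2 (m.x_mono i hi)

lemma sum_h : ∑ i ∈ Finset.range N, m.h i = 1 := by
  simp only [h]
  rw [Finset.sum_range_sub, m.x_zero, m.x_last, sub_zero]

/-- The normalized Lebesgue measure on the element of index `i`, so that `⟨g⟩_i` is an `L²` norm. -/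
abbrev cell (i : ℕ) : Measure ℝ := uniformMeasure (m.x i) (m.x (i + 1))

lemma isProbabilityMeasure_cell (hi : i < N) : IsProbabilityMeasure (m.cell i) :=
  isProbabilityMeasure_uniformMeasure (m.x_mono i hi)

lemma memLp_cell {p : ENNReal} (hi : i < N) (hg : MemLp g p unitMeasure) : MemLp g p (m.cell i) :=
  memLp_uniformMeasure_of_subset (m.x_mono i hi)
    (Set.Ioc_subset_Ioc (m.x_mem_Icc hi.le).1 (m.x_mem_Icc hi).2) hg

lemma h_mul_integral_cell (hi : i < N) (g : ℝ → ℝ) :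
    m.h i * ∫ t, g t ∂m.cell i = ∫ t in (m.x i)..(m.x (i + 1)), g t := by
  rw [integral_uniformMeasure (m.x_mono i hi).le]
  exact mul_inv_cancel_left₀ (m.h_pos hi).ne' _

lemma hasACDerivOn_cell (hF : HasACDerivOn F F' 0 1) (hi : i < N) :
    HasACDerivOn F F' (m.x i) (m.x (i + 1)) :=
  hF.mono (Set.Icc_subset_uIcc (m.x_mem_Icc hi.le)) (Set.Icc_subset_uIcc (m.x_mem_Icc hi))

lemma avg_eq_lpNorm (hi : i < N) (hg : MemLp g 2 (m.cell i)) :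
    m.avg g i = lpNorm g 2 (m.cell i) := by
  rw [← Real.sqrt_sq (lpNorm_nonneg (f := g)), lpNorm_two_sq hg,
    integral_uniformMeasure (m.x_mono i hi).le, avg, one_div, h]

lemma sum_h_mul_integral_cell (hg : Integrable g unitMeasure) :
    ∑ i ∈ Finset.range N, m.h i * ∫ t, g t ∂m.cell i = ∫ t, g t ∂unitMeasure := by
  have hint : ∀ i < N, IntervalIntegrable g volume (m.x i) (m.x (i + 1)) := fun i hi =>
    ((integrable_uniformMeasure_iff zero_lt_one).1 hg).mono_set (Set.uIcc_subset_uIcc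
      (Set.Icc_subset_uIcc (m.x_mem_Icc hi.le)) (Set.Icc_subset_uIcc (m.x_mem_Icc hi)))
  calc ∑ i ∈ Finset.range N, m.h i * ∫ t, g t ∂m.cell i
      = ∑ i ∈ Finset.range N, ∫ t in (m.x i)..(m.x (i + 1)), g t :=
        Finset.sum_congr rfl fun i hi => m.h_mul_integral_cell (Finset.mem_range.1 hi) g
    _ = ∫ t, g t ∂unitMeasure := by
        rw [intervalIntegral.sum_integral_adjacent_intervals hint, m.x_zero, m.x_last,
          integral_unitMeasure]

/-- The piecewise constant function whose value on each element is the mean of `g` there; it is the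
derivative of the piecewise linear interpolant of a primitive of `g`. -/
def cellMean (g : ℝ → ℝ) (t : ℝ) : ℝ :=
  ∑ i ∈ Finset.range N,
    (Set.Ioo (m.x i) (m.x (i + 1))).indicator (fun _ => ∫ s, g s ∂m.cell i) t

lemma cellMean_of_mem (hi : i < N) {t : ℝ}
    (ht : t ∈ Set.Ioo (m.x i) (m.x (i + 1))) : m.cellMean g t = ∫ s, g s ∂m.cell i := by
  rw [cellMean, Finset.sum_eq_single_of_mem i (Finset.mem_range.2 hi),
    Set.indicator_of_mem ht]
  intro j hj hji
  refine Set.indicator_of_notMem (fun htj => ?_) _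
  have hjN : j < N := Finset.mem_range.1 hj
  have hx := m.strictMonoOn_x.monotoneOn
  rcases lt_or_gt_of_ne hji with hlt | hlt
  · exact (hx hjN hi.le hlt).not_gt (ht.1.trans htj.2)
  · exact (hx hi hjN.le hlt).not_gt (htj.1.trans ht.2)

lemma ae_cellMean_eq (g : ℝ → ℝ) (hi : i < N) :
    ∀ᵐ t ∂m.cell i, m.cellMean g t = ∫ s, g s ∂m.cell i :=
  (ae_mem_uniformMeasure _ _).mono fun _ ht => m.cellMean_of_mem hi ht

lemma measurable_cellMean (g : ℝ → ℝ) : Measurable (m.cellMean g) :=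
  Finset.measurable_fun_sum _ fun _ _ => measurable_const.indicator measurableSet_Ioo

lemma memLp_cellMean (g : ℝ → ℝ) (p : ENNReal) : MemLp (m.cellMean g) p unitMeasure :=
  memLp_finsetSum _ fun _ _ => (memLp_const _).indicator measurableSet_Ioo

lemma integral_cellMean (hg : Integrable g unitMeasure) :
    ∫ t, m.cellMean g t ∂unitMeasure = ∫ t, g t ∂unitMeasure := by
  rw [← m.sum_h_mul_integral_cell ((m.memLp_cellMean g 1).integrable le_rfl),
    ← m.sum_h_mul_integral_cell hg]
  refine Finset.sum_congr rfl fun i hi => ?_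
  have hi' := Finset.mem_range.1 hi
  have := m.isProbabilityMeasure_cell hi'
  rw [integral_congr_ae (m.ae_cellMean_eq g hi')]
  simp

lemma integral_sub_cellMean_sq_le (hF : HasACDerivOn F F' 0 1)
    (hF' : MemLp F' 2 unitMeasure) (hi : i < N) :
    ∫ t, (F t - m.cellMean F t) ^ 2 ∂m.cell i ≤ m.h i ^ 2 * ∫ t, F' t ^ 2 ∂m.cell i := by
  have := m.isProbabilityMeasure_cell hi
  have hF'i := m.memLp_cell hi hF'
  have hFi := m.hasACDerivOn_cell hF hi
  have hdev : MemLp (fun t => F t - ∫ s, F s ∂m.cell i) 2 (m.cell i) :=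
    (memLp_uniformMeasure_of_continuousOn (m.x_mono i hi) 2 hFi.ac.continuousOn).sub
      (memLp_const _)
  calc ∫ t, (F t - m.cellMean F t) ^ 2 ∂m.cell i
      = lpNorm (fun t => F t - ∫ s, F s ∂m.cell i) 2 (m.cell i) ^ 2 := by
        rw [lpNorm_two_sq hdev]
        exact integral_congr_ae ((m.ae_cellMean_eq F hi).mono fun t ht => by simp only [ht])
    _ ≤ (m.h i * lpNorm F' 2 (m.cell i)) ^ 2 :=
        pow_le_pow_left₀ lpNorm_nonneg
          (hFi.lpNorm_sub_integral_le (m.x_mono i hi) one_le_two hF'i) 2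
    _ = m.h i ^ 2 * ∫ t, F' t ^ 2 ∂m.cell i := by rw [mul_pow, lpNorm_two_sq hF'i]

lemma lpNorm_sub_cellMean_le (hF : HasACDerivOn F F' 0 1)
    (hF' : MemLp F' 2 unitMeasure) {H : ℝ} (hH : 0 ≤ H) (hm : ∀ i < N, m.h i ≤ H) :
    lpNorm (fun t => F t - m.cellMean F t) 2 unitMeasure ≤ H * lpNorm F' 2 unitMeasure := by
  have hsub : MemLp (fun t => F t - m.cellMean F t) 2 unitMeasure :=
    (memLp_uniformMeasure_of_continuousOn zero_lt_one 2 hF.ac.continuousOn).sub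
      (m.memLp_cellMean F 2)
  refine (pow_le_pow_iff_left₀ lpNorm_nonneg (mul_nonneg hH lpNorm_nonneg) two_ne_zero).1 ?_
  rw [mul_pow, lpNorm_two_sq hsub, lpNorm_two_sq hF',
    ← m.sum_h_mul_integral_cell hsub.integrable_sq, ← m.sum_h_mul_integral_cell hF'.integrable_sq,
    Finset.mul_sum]
  refine Finset.sum_le_sum fun i hi => ?_
  have hiN := Finset.mem_range.1 hi
  have hh := (m.h_pos hiN).le
  calc m.h i * ∫ t, (F t - m.cellMean F t) ^ 2 ∂m.cell i
      ≤ m.h i * (H ^ 2 * ∫ t, F' t ^ 2 ∂m.cell i) := by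
        refine mul_le_mul_of_nonneg_left ((m.integral_sub_cellMean_sq_le hF hF' hiN).trans ?_) hh
        exact mul_le_mul_of_nonneg_right (pow_le_pow_left₀ hh (hm i hiN) 2)
          (integral_nonneg fun _ => sq_nonneg _)
    _ = H ^ 2 * (m.h i * ∫ t, F' t ^ 2 ∂m.cell i) := by ring

lemma exists_isPL_seminorm_sub_le {u : H1} (h0 : u.val 0 = 0) (h1 : u.val 1 = 0) {q q' : ℝ → ℝ}
    (hq : HasACDerivOn q q' 0 1) (huq : u.dval =ᵐ[unitMeasure] q) (hq' : MemLp q' 2 unitMeasure)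
    {H : ℝ} (hH : 0 ≤ H) (hm : ∀ i < N, m.h i ≤ H) :
    ∃ w : H1, w.val 0 = 0 ∧ w.val 1 = 0 ∧ m.IsPL w ∧
      (u - w).seminorm ≤ H * lpNorm q' 2 unitMeasure := by
  have hw1 : ∫ t in (0 : ℝ)..1, m.cellMean q t = 0 := by
    rw [← integral_unitMeasure, m.integral_cellMean ((integrable_congr huq).1
      (u.memLp_dval.integrable one_le_two)), ← integral_congr_ae huq, integral_unitMeasure,
      u.hasACDerivOn.integral_eq_sub, h0, h1, sub_zero]
  refine ⟨H1.primitive (m.cellMean q) (m.measurable_cellMean q) (m.memLp_cellMean q 2),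
    intervalIntegral.integral_same, hw1, fun i hi => ⟨_, fun t ht => m.cellMean_of_mem hi ht⟩, ?_⟩
  exact (lpNorm_congr_ae (huq.mono fun t ht => congrArg (· - m.cellMean q t) ht)).trans_le
    (m.lpNorm_sub_cellMean_le hq hq' hH hm)

end Mesh

namespace Coeffs.IsFESolution

variable {P : Coeffs} {f : ℝ → ℝ} {N : ℕ} {m : Mesh N} {u uh : H1} {K : ℝ}

lemma B_sub_eq_zero (huh : P.IsFESolution f m uh) (hu : P.IsWeakSolution f u) {v : H1}
    (h0 : v.val 0 = 0) (h1 : v.val 1 = 0) (hv : m.IsPL v) : P.B (u - uh) v = 0 := by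
  rw [B_sub_left, hu.2.2 v h0 h1, huh.2.2.2 v h0 h1 hv, sub_self]

lemma mul_seminorm_sub_le (huh : P.IsFESolution f m uh) (hu : P.IsWeakSolution f u)
    (hP : P.BoundedBy K) {w : H1} (h0 : w.val 0 = 0) (h1 : w.val 1 = 0) (hw : m.IsPL w) :
    P.a0 * (u - uh).seminorm ≤ 3 * K * (u - w).seminorm := by
  set e := u - uh
  have he0 : e.val 0 = 0 := by simp [e, hu.1, huh.1]
  have he1 : e.val 1 = 0 := by simp [e, hu.2.1, huh.2.1]
  have horth : P.B e e = P.B e (u - w) := by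
    rw [B_sub_right, B_sub_right, huh.B_sub_eq_zero hu huh.1 huh.2.1 huh.2.2.1,
      huh.B_sub_eq_zero hu h0 h1 hw]
  rcases e.seminorm_nonneg.eq_or_lt with he | he
  · rw [← he, mul_zero]
    exact mul_nonneg (mul_nonneg zero_le_three hP.nonneg) (u - w).seminorm_nonneg
  · refine le_of_mul_le_mul_right ?_ he
    calc P.a0 * e.seminorm * e.seminorm = P.a0 * e.seminorm ^ 2 := by ring
      _ ≤ P.B e (u - w) := by
          rw [← horth, P.B_self_eq_energySq e he0 he1]
          exact P.mul_seminorm_sq_le_energySq e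
      _ ≤ 3 * K * e.seminorm * (u - w).seminorm :=
          (le_abs_self _).trans (hP.abs_B_le e (u - w) he0 (by simp [hu.1, h0]))
      _ = 3 * K * (u - w).seminorm * e.seminorm := by ring

end Coeffs.IsFESolution

lemma Coeffs.exists_lpNorm_res_sub_res_le (P : Coeffs) :
    ∃ D : ℝ, 0 ≤ D ∧ ∀ (f : ℝ → ℝ) (u uh : H1) (N : ℕ) (m : Mesh N) (H : ℝ), MemL2 f →
      P.IsWeakSolution f u → P.IsFESolution f m uh → 0 ≤ H → (∀ i < N, m.h i ≤ H) →
        lpNorm (P.res f u - P.res f uh) 2 unitMeasure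
          ≤ D * (H * lpNorm (P.res f u) 2 unitMeasure) := by
  obtain ⟨K, hP⟩ := P.exists_boundedBy
  have hK := hP.nonneg
  have ha0 := P.a0_pos
  refine ⟨3 * K * (P.a0⁻¹ * (3 * K)) * P.a0⁻¹, by positivity, ?_⟩
  intro f u uh N m H hf hu huh hH hm
  obtain ⟨q, q', hq, huq, hq'2, hq'⟩ := hu.exists_hasACDerivOn_lpNorm_le hf
  obtain ⟨w, hw0, hw1, hw, huw⟩ := m.exists_isPL_seminorm_sub_le hu.1 hu.2.1 hq huq hq'2 hH hm
  calc lpNorm (P.res f u - P.res f uh) 2 unitMeasure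
      ≤ 3 * K * (u - uh).seminorm :=
        hP.lpNorm_res_sub_res_le f u uh (hu.1.trans huh.1.symm)
    _ ≤ 3 * K * (P.a0⁻¹ * (3 * K * (u - w).seminorm)) := by
        gcongr
        exact (le_inv_mul_iff₀ ha0).2 (huh.mul_seminorm_sub_le hu hP hw0 hw1 hw)
    _ ≤ 3 * K * (P.a0⁻¹ * (3 * K * (H * (P.a0⁻¹ * lpNorm (P.res f u) 2 unitMeasure)))) := by
        gcongr
        exact huw.trans (mul_le_mul_of_nonneg_left hq' hH)
    _ = 3 * K * (P.a0⁻¹ * (3 * K)) * P.a0⁻¹ * (H * lpNorm (P.res f u) 2 unitMeasure) := by ring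

namespace Mesh

variable {N : ℕ} (m : Mesh N)

/-- The sum `Σ_i h_i ⟨g⟩_i^p`, a discrete analogue of `∫ |g|^p`; `α_h` is its cube for
`p = 2/3`. -/
def powerSum (p : ℝ) (g : ℝ → ℝ) : ℝ := ∑ i ∈ Finset.range N, m.h i * m.avg g i ^ p

lemma alpha_rpow (g : ℝ → ℝ) : m.alpha g ^ ((1 : ℝ) / 3) = m.powerSum (2 / 3) g := by
  have h0 : 0 ≤ m.powerSum (2 / 3) g := Finset.sum_nonneg fun i hi =>
    mul_nonneg (m.h_pos (Finset.mem_range.1 hi)).le (Real.rpow_nonneg (Real.sqrt_nonneg _) _)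
  rw [one_div]
  exact Real.pow_rpow_inv_natCast h0 three_ne_zero

variable {p : ℝ} {f g : ℝ → ℝ}

lemma powerSum_eq (hg : MemLp g 2 unitMeasure) :
    m.powerSum p g = ∑ i ∈ Finset.range N, m.h i * lpNorm g 2 (m.cell i) ^ p :=
  Finset.sum_congr rfl fun i hi => by
    have hiN := Finset.mem_range.1 hi
    rw [m.avg_eq_lpNorm hiN (m.memLp_cell hiN hg)]

lemma integral_abs_rpow_le_powerSum (hp0 : 0 < p) (hp2 : p ≤ 2) (hg : MemLp g 2 unitMeasure) :
    ∫ t, |g t| ^ p ∂unitMeasure ≤ m.powerSum p g := by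
  have hp2' : ENNReal.ofReal p ≤ 2 := by simpa using ENNReal.ofReal_le_ofReal hp2
  rw [m.powerSum_eq hg, ← m.sum_h_mul_integral_cell (integrable_abs_rpow hp0 hp2' hg)]
  refine Finset.sum_le_sum fun i hi => ?_
  have hiN := Finset.mem_range.1 hi
  have := m.isProbabilityMeasure_cell hiN
  exact mul_le_mul_of_nonneg_left
    (integral_abs_rpow_le_lpNorm_rpow hp0 hp2' (m.memLp_cell hiN hg)) (m.h_pos hiN).le

lemma powerSum_le_lpNorm_rpow (hp0 : 0 ≤ p) (hp2 : p ≤ 2) (hg : MemLp g 2 unitMeasure) :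
    m.powerSum p g ≤ lpNorm g 2 unitMeasure ^ p := by
  have hsq : ∀ z : ℝ, 0 ≤ z → z ^ p = (z ^ 2) ^ (p / 2) := fun z hz => by
    rw [← Real.rpow_two, ← Real.rpow_mul hz, mul_div_cancel₀ p two_ne_zero]
  rw [m.powerSum_eq hg, hsq _ lpNorm_nonneg, lpNorm_two_sq hg,
    ← m.sum_h_mul_integral_cell hg.integrable_sq]
  calc ∑ i ∈ Finset.range N, m.h i * lpNorm g 2 (m.cell i) ^ p
      = ∑ i ∈ Finset.range N, m.h i * (∫ t, g t ^ 2 ∂m.cell i) ^ (p / 2) :=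
        Finset.sum_congr rfl fun i hi => by
          rw [hsq _ lpNorm_nonneg, lpNorm_two_sq (m.memLp_cell (Finset.mem_range.1 hi) hg)]
    _ ≤ (∑ i ∈ Finset.range N, m.h i * ∫ t, g t ^ 2 ∂m.cell i) ^ (p / 2) :=
        sum_mul_rpow_le_rpow_sum_mul (by positivity) (by linarith)
          (fun i hi => (m.h_pos (Finset.mem_range.1 hi)).le) m.sum_h
          fun i _ => integral_nonneg fun t => sq_nonneg (g t)

lemma powerSum_le_powerSum_add (hp0 : 0 ≤ p) (hp1 : p ≤ 1) (hf : MemLp f 2 unitMeasure)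
    (hg : MemLp g 2 unitMeasure) :
    m.powerSum p f ≤ m.powerSum p g + lpNorm (f - g) 2 unitMeasure ^ p := by
  refine le_trans ?_ (add_le_add_right
    (m.powerSum_le_lpNorm_rpow hp0 (hp1.trans one_le_two) (hf.sub hg)) _)
  rw [m.powerSum_eq hf, m.powerSum_eq hg, m.powerSum_eq (hf.sub hg), ← Finset.sum_add_distrib]
  refine Finset.sum_le_sum fun i hi => ?_
  have hiN := Finset.mem_range.1 hi
  have htriangle := lpNorm_le_lpNorm_add_lpNorm_sub' (f := f) (m.memLp_cell hiN hg) one_le_two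
  rw [← mul_add]
  refine mul_le_mul_of_nonneg_left ?_ (m.h_pos hiN).le
  exact (Real.rpow_le_rpow lpNorm_nonneg htriangle hp0).trans
    (Real.rpow_add_le_add_rpow lpNorm_nonneg lpNorm_nonneg hp0 hp1)

end Mesh

lemma HasACDerivOn.lpNorm_rpow_le {F F' : ℝ → ℝ} {x y p : ℝ} {q : ENNReal}
    (h : HasACDerivOn F F' x y) (hxy : x < y) (hp0 : 0 < p) (hp1 : p ≤ 1) :
    lpNorm F q (uniformMeasure x y) ^ p ≤ ∫ t, |F t| ^ p ∂uniformMeasure x y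
      + ((y - x) * lpNorm F' 1 (uniformMeasure x y)) ^ p := by
  have := isProbabilityMeasure_uniformMeasure hxy
  set δ := (y - x) * lpNorm F' 1 (uniformMeasure x y)
  have hδ : 0 ≤ δ := mul_nonneg (sub_pos.2 hxy).le lpNorm_nonneg
  have hF (q : ENNReal) : MemLp F q (uniformMeasure x y) :=
    memLp_uniformMeasure_of_continuousOn hxy q h.ac.continuousOn
  have hpoint : ∀ t ∈ Set.Ioo x y, lpNorm F q (uniformMeasure x y) ≤ |F t| + δ := by
    intro t ht
    refine lpNorm_le_of_ae_abs_le (hF q).1 (by positivity) ?_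
    filter_upwards [ae_mem_uniformMeasure x y] with s hs
    have hosc := h.abs_sub_le_mul_lpNorm hxy (Set.Ioo_subset_Icc_self hs)
      (Set.Ioo_subset_Icc_self ht)
    linarith [abs_sub_abs_le_abs_sub (F s) (F t)]
  have hint := integrable_abs_rpow hp0 (by simpa using hp1) (hF 1)
  calc lpNorm F q (uniformMeasure x y) ^ p
      = ∫ _, lpNorm F q (uniformMeasure x y) ^ p ∂uniformMeasure x y := by simp
    _ ≤ ∫ t, (|F t| ^ p + δ ^ p) ∂uniformMeasure x y := by
        refine integral_mono_ae (integrable_const _) (hint.add (integrable_const _)) ?_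
        filter_upwards [ae_mem_uniformMeasure x y] with t ht
        exact (Real.rpow_le_rpow lpNorm_nonneg (hpoint t ht) hp0.le).trans
          (Real.rpow_add_le_add_rpow (abs_nonneg _) hδ hp0.le hp1)
    _ = ∫ t, |F t| ^ p ∂uniformMeasure x y + δ ^ p := by
        rw [integral_add hint (integrable_const _)]
        simp

lemma Mesh.powerSum_le_integral_abs_rpow_add {N : ℕ} (m : Mesh N) {p : ℝ} {g g' : ℝ → ℝ}
    (hp0 : 0 < p) (hp1 : p ≤ 1) (hg : HasACDerivOn g g' 0 1) {H : ℝ} (hH : 0 ≤ H)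
    (hm : ∀ i < N, m.h i ≤ H) :
    m.powerSum p g ≤ ∫ t, |g t| ^ p ∂unitMeasure + (H * lpNorm g' 1 unitMeasure) ^ p := by
  have hg2 := memLp_uniformMeasure_of_continuousOn zero_lt_one 2 hg.ac.continuousOn
  have hg'1 : MemLp g' 1 unitMeasure := memLp_one_iff_integrable.2
    ((integrable_uniformMeasure_iff zero_lt_one).2 hg.intervalIntegrable)
  have hsum : ∑ i ∈ Finset.range N, m.h i * (H * lpNorm g' 1 (m.cell i))
      = H * lpNorm g' 1 unitMeasure := by
    rw [lpNorm_one_eq_integral_norm hg'1.1, ← m.sum_h_mul_integral_cell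
      (hg'1.integrable le_rfl).norm, Finset.mul_sum]
    refine Finset.sum_congr rfl fun i hi => ?_
    rw [lpNorm_one_eq_integral_norm (m.memLp_cell (Finset.mem_range.1 hi) hg'1).1, mul_left_comm]
  rw [m.powerSum_eq hg2, ← m.sum_h_mul_integral_cell
    (integrable_abs_rpow hp0 (by simpa using hp1.trans one_le_two) hg2), ← hsum]
  refine le_trans ?_ (add_le_add_right (sum_mul_rpow_le_rpow_sum_mul hp0.le hp1
    (fun i hi => (m.h_pos (Finset.mem_range.1 hi)).le) m.sum_h
    fun i _ => mul_nonneg hH lpNorm_nonneg) _)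
  rw [← Finset.sum_add_distrib]
  refine Finset.sum_le_sum fun i hi => ?_
  have hiN := Finset.mem_range.1 hi
  rw [← mul_add]
  refine mul_le_mul_of_nonneg_left ?_ (m.h_pos hiN).le
  refine ((m.hasACDerivOn_cell hg hiN).lpNorm_rpow_le (m.x_mono i hiN) hp0 hp1).trans ?_
  gcongr
  · exact mul_nonneg (m.h_pos hiN).le lpNorm_nonneg
  · exact lpNorm_nonneg
  · exact hm i hiN

theorem statement13_general (P : Coeffs) (C₁ : ℝ) (hC₁ : 0 < C₁) :
    ∃ C : ℝ, 0 < C ∧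
      ∀ p : ℝ, 0 < p → p ≤ 1 →
      ∀ f : ℝ → ℝ, MemL2 f →
      ∀ u : H1, P.IsWeakSolution f u →
      ∀ r' : ℝ → ℝ, HasL1Deriv (P.res f u) r' →
      ∀ (N : ℕ) (m : Mesh N), (∀ i < N, m.h i ≤ C₁ / (N : ℝ)) →
      ∀ uh : H1, P.IsFESolution f m uh →
        (∫ t in (0 : ℝ)..1, |P.res f u t| ^ p) - (C * L2 (P.res f u) / (N : ℝ)) ^ p
            ≤ m.powerSum p (P.res f uh) ∧
        m.powerSum p (P.res f uh)
            ≤ (∫ t in (0 : ℝ)..1, |P.res f u t| ^ p)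
              + (C * L1 r' / (N : ℝ)) ^ p
              + (C * L2 (P.res f u) / (N : ℝ)) ^ p := by
  obtain ⟨D, hD, hres⟩ := P.exists_lpNorm_res_sub_res_le
  refine ⟨(1 + D) * C₁, by positivity, ?_⟩
  intro p hp0 hp1 f hf u hu r' hr' N m hm uh huh
  have hH : 0 ≤ C₁ / (N : ℝ) := by positivity
  have hr2 := P.memLp_res hf u
  have hrh2 := P.memLp_res hf uh
  have hscale : ∀ k z : ℝ, k ≤ 1 + D → 0 ≤ z →
      k * (C₁ / N * z) ≤ (1 + D) * C₁ * z / N := fun k z hk hz =>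
    calc k * (C₁ / N * z) ≤ (1 + D) * (C₁ / N * z) :=
          mul_le_mul_of_nonneg_right hk (mul_nonneg hH hz)
      _ = (1 + D) * C₁ * z / N := by ring
  have hL1 : (C₁ / N * lpNorm r' 1 unitMeasure) ^ p ≤ ((1 + D) * C₁ * L1 r' / N) ^ p := by
    rw [L1_eq_lpNorm hr'.1.aestronglyMeasurable]
    refine Real.rpow_le_rpow (mul_nonneg hH lpNorm_nonneg) ?_ hp0.le
    simpa using hscale 1 _ (by linarith) lpNorm_nonneg
  have hL2 : lpNorm (P.res f u - P.res f uh) 2 unitMeasure ^ p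
      ≤ ((1 + D) * C₁ * L2 (P.res f u) / N) ^ p := by
    rw [L2_eq_lpNorm hr2]
    exact Real.rpow_le_rpow lpNorm_nonneg ((hres f u uh N m _ hf hu huh hH hm).trans
      (hscale D _ (by linarith) lpNorm_nonneg)) hp0.le
  rw [← integral_unitMeasure]
  constructor
  · rw [sub_le_iff_le_add]
    exact (m.integral_abs_rpow_le_powerSum hp0 (hp1.trans one_le_two) hr2).trans
      ((m.powerSum_le_powerSum_add hp0.le hp1 hr2 hrh2).trans (add_le_add_right hL2 _))
  · rw [lpNorm_sub_comm] at hL2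
    exact (m.powerSum_le_powerSum_add hp0.le hp1 hrh2 hr2).trans (add_le_add
      ((m.powerSum_le_integral_abs_rpow_add hp0 hp1 hr'.hasACDerivOn hH hm).trans
        (add_le_add_right hL1 _)) hL2)

/-- a priori bounds on α_h for meshes with max_i h_i ≤ C₁/N
(Lemma 3.10). -/
theorem statement13 (P : Coeffs) (C₁ : ℝ) (hC₁ : 0 < C₁) :
    ∃ C : ℝ, 0 < C ∧
      ∀ f : ℝ → ℝ, MemL2 f →
      ∀ u : H1, P.IsWeakSolution f u → u.IsH2 →
      ∀ r' : ℝ → ℝ, HasL1Deriv (P.res f u) r' →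
      ∀ (N : ℕ) (m : Mesh N), (∀ i < N, m.h i ≤ C₁ / (N:ℝ)) →
      ∀ uh : H1, P.IsFESolution f m uh →
        (Lp23 (P.res f u)) ^ ((2:ℝ)/3) - (C * L2 (P.res f u) / (N:ℝ)) ^ ((2:ℝ)/3)
            ≤ (m.alpha (P.res f uh)) ^ ((1:ℝ)/3) ∧
        (m.alpha (P.res f uh)) ^ ((1:ℝ)/3)
            ≤ (Lp23 (P.res f u)) ^ ((2:ℝ)/3)
              + (C * L1 r' / (N:ℝ)) ^ ((2:ℝ)/3)
              + (C * L2 (P.res f u) / (N:ℝ)) ^ ((2:ℝ)/3) := by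
  obtain ⟨C, hC, h⟩ := statement13_general P C₁ hC₁
  refine ⟨C, hC, fun f hf u hu _ r' hr' N m hm uh huh => ?_⟩
  simpa only [Lp23_rpow, Mesh.alpha_rpow] using
    h (2 / 3) (by norm_num) (by norm_num) f hf u hu r' hr' N m hm uh huh

end EquidMesh
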